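/- Let H be a real Hilbert space, d ≥ 1 an integer, C ⊆ H a nonempty closed convex set with ‖x − y‖ ≤ d for all x, y ∈ C, T : C → C nonexpansive with Fix(T) ≠ ∅, and G : C → C a τ-contraction (0 ≤ τ < 1). Let (λ_n) ⊆ (0,1], h : ℕ → ℕ⁺ with λ_n ≥ 1/h(n) for all n, and χ : ℕ → ℕ with λ_i ≤ 1/(n+1) for all n ∈ ℕ and all i ≥ χ(n). Let v : ℕ → C satisfy v_n = (1−λ_n)·T(v_n) + λ_n·G(T(v_n)) for all n. Then for every ε ∈ (0,1] and every g : ℕ → ℕ there exists j ≤ Ξ(ε, g, χ, h, d, τ) such that ‖v_j − v_{g̃(j)}‖ ≤ ε. -/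

import Mathlib

open scoped RealInnerProductSpace

/-- `fM f n = max {f i : 1 ≤ i ≤ n}`. -/
def fM (f : ℕ → ℕ) (n : ℕ) : ℕ := (Finset.Icc 1 n).sup f

/-- `ftilde d f n = max {fᴹ(16·d·n²), 16·d·n²}`. -/
def ftilde (d : ℕ) (f : ℕ → ℕ) (n : ℕ) : ℕ := max (fM f (16 * d * n ^ 2)) (16 * d * n ^ 2)

/-- `fIt d nε f i = f̃^(nε^i)`, the `nε^i`-fold iterate of `f̃`. -/
def fIt (d nε : ℕ) (f : ℕ → ℕ) (i : ℕ) (k : ℕ) : ℕ := (ftilde d f)^[nε ^ i] k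

/-- `ftildeI d nε f i n = max {fᵢᴹ(16·d·n²), 16·d·n²}`. -/
def ftildeI (d nε : ℕ) (f : ℕ → ℕ) (i : ℕ) (n : ℕ) : ℕ :=
  max (fM (fIt d nε f i) (16 * d * n ^ 2)) (16 * d * n ^ 2)

/-- The recursively defined sequence `k₀ := f̃₀^(nε)(1)`, `k_{i+1} := f̃ᵢ^(nε)(kᵢ)`. -/
def kSeq (d nε : ℕ) (f : ℕ → ℕ) : ℕ → ℕ
  | 0 => (ftildeI d nε f 0)^[nε] 1
  | (i + 1) => (ftildeI d nε f i)^[nε] (kSeq d nε f i)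

/-- `Kdef d τ ε̃ f = k_{i₀}` where `n_ε̃ := ⌈8d⁴/ε̃⁴⌉` and `i₀` is the least `i`
with `τ^(i+1) ≤ ε̃/(6d²)`. -/
noncomputable def Kdef (d : ℕ) (τ εt : ℝ) (f : ℕ → ℕ) : ℕ :=
  kSeq d ⌈8 * (d : ℝ) ^ 4 / εt ^ 4⌉₊ f
    (sInf {i : ℕ | τ ^ (i + 1) ≤ εt / (6 * (d : ℝ) ^ 2)})

/-- `fM0 F n = max {F i : 0 ≤ i ≤ n}` (for functions on ℕ). -/
def fM0 (F : ℕ → ℕ) (n : ℕ) : ℕ := (Finset.range (n + 1)).sup F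

/-- `gTil g n = max {n, g n}`. -/
def gTil (g : ℕ → ℕ) (n : ℕ) : ℕ := max n (g n)

/-- The counterfunction majorant `f(n) := ⌈6d·hᴹ(g̃ᴹ(χ(d·n)))/((1−τ)(ε/2)²)⌉`. -/
noncomputable def fXi (ε τ : ℝ) (g χ h : ℕ → ℕ) (d : ℕ) (n : ℕ) : ℕ :=
  ⌈6 * (d : ℝ) * (fM0 h (fM0 (gTil g) (χ (d * n))) : ℝ) / ((1 - τ) * (ε / 2) ^ 2)⌉₊

/-- The quantity `K = k_{i₀}` occurring in the definition of `Ξ(ε, g, χ, h, d, τ)`,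
with `ε₁ := (1−τ)(ε/2)²/2`, `ε_d := ε₁²/(2d²)` and `ε̃ := ((1−τ)²/(6+8d))·ε_d`. -/
noncomputable def KXi (ε : ℝ) (g χ h : ℕ → ℕ) (d : ℕ) (τ : ℝ) : ℕ :=
  Kdef d τ ((1 - τ) ^ 2 / (6 + 8 * (d : ℝ)) *
    (((1 - τ) * (ε / 2) ^ 2 / 2) ^ 2 / (2 * (d : ℝ) ^ 2))) (fXi ε τ g χ h d)

/-- The rate of metastability `Ξ(ε, g, χ, h, d, τ) := χ(d·k_{i₀})`. -/
noncomputable def XiDef (ε : ℝ) (g χ h : ℕ → ℕ) (d : ℕ) (τ : ℝ) : ℕ :=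
  χ (d * KXi ε g χ h d τ)

/-!
By Browder's theorem the resolvents `v n` converge to the fixed point of `P ∘ G`, where `P` is the
metric projection onto `Fix T`. Quantitatively, `Fix T` is replaced by the sets of
`1 / n`-approximate fixed points, which contain the `v i` with small `lam i`, and `P` by approximate
projections onto them. Such a projection is found in finitely many descent steps, because a failure
of the variational inequality decreases the squared distance to the projected point by a fixed
amount. Projecting repeatedly the image under `G` of the point just found is a Picard iteration of a
`τ`-contraction, and so leads to a point `x` that almost projects `G x`; the growth of `kSeq` pays
for these nested searches. Monotonicity of `id - T` then forces `v i` close to `x` for all `i` in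
the range prescribed by `g`.
-/

section NormedGroup

variable {H : Type*} [NormedAddCommGroup H]

/-- The points of `C` which `T` moves by at most `1 / n`; the inequality is multiplied by `n`, so
that `n = 0` gives all of `C`. -/
def approxFixedPoints (C : Set H) (T : H → H) (n : ℕ) : Set H :=
  {x ∈ C | n * ‖x - T x‖ ≤ 1}

lemma antitone_approxFixedPoints (C : Set H) (T : H → H) : Antitone (approxFixedPoints C T) := by
  rintro m n hmn x ⟨hxC, hx⟩
  refine ⟨hxC, le_trans ?_ hx⟩
  gcongr

variable [NormedSpace ℝ H]

lemma resolvent_sub_map {w p q : H} {l : ℝ} (hw : w = (1 - l) • p + l • q) :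
    w - p = l • (q - p) := by
  rw [hw]
  module

lemma resolvent_mem_approxFixedPoints {C : Set H} {T : H → H} {w q : H} {l : ℝ} {d n : ℕ}
    (hw : w = (1 - l) • T w + l • q) (hwC : w ∈ C) (hl0 : 0 ≤ l) (hd : ‖q - T w‖ ≤ d)
    (hl : l ≤ 1 / ((d * n : ℕ) + 1)) : w ∈ approxFixedPoints C T n := by
  refine ⟨hwC, ?_⟩
  have hl' := (le_div_iff₀ (by positivity)).1 hl
  push_cast at hl'
  calc n * ‖w - T w‖ = l * (n * ‖q - T w‖) := by
        rw [resolvent_sub_map hw, norm_smul, Real.norm_of_nonneg hl0]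
        ring
    _ ≤ l * (n * d) := by gcongr
    _ ≤ 1 := by linarith

end NormedGroup

section Iterates

variable {d : ℕ}

lemma le_sixteen_mul_sq (hd : 1 ≤ d) (m : ℕ) : m ≤ 16 * d * m ^ 2 :=
  (Nat.le_self_pow two_ne_zero m).trans (Nat.le_mul_of_pos_left _ (by positivity))

lemma id_le_ftilde (hd : 1 ≤ d) (f : ℕ → ℕ) : id ≤ ftilde d f :=
  fun m => (le_sixteen_mul_sq hd m).trans (le_max_right _ _)

lemma apply_le_ftilde (f : ℕ → ℕ) {m n : ℕ} (hm : 1 ≤ m) (hmn : m ≤ 16 * d * n ^ 2) :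
    f m ≤ ftilde d f n :=
  (Finset.le_sup (f := f) (Finset.mem_Icc.2 ⟨hm, hmn⟩)).trans (le_max_left _ _)

lemma monotone_ftilde (d : ℕ) (f : ℕ → ℕ) : Monotone (ftilde d f) := by
  intro a b hab
  have hsq : 16 * d * a ^ 2 ≤ 16 * d * b ^ 2 := by gcongr
  exact max_le_max (Finset.sup_mono (Finset.Icc_subset_Icc_right hsq)) hsq

/-- The bound on the search for an approximate projection in `N` descent steps, as an operator on
the function `φ` which prescribes the required accuracy. -/
def projRate (d N : ℕ) (φ : ℕ → ℕ) : ℕ → ℕ := (ftilde d φ)^[N]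

lemma projRate_le_iterate_of_le {f φ : ℕ → ℕ} {t : ℕ} (hd : 1 ≤ d) (N : ℕ)
    (hφ : φ ≤ (ftilde d f)^[t]) : projRate d N φ ≤ (ftilde d f)^[(t + 1) * N] := by
  have hmono := (monotone_ftilde d f).iterate t
  have hstep : ftilde d φ ≤ (ftilde d f)^[t + 1] := by
    intro a
    rw [Function.iterate_succ_apply]
    refine le_trans ?_ (hmono (le_max_right _ _))
    refine max_le (Finset.sup_le fun i hi => ?_)
      (Function.id_le_iterate_of_id_le (id_le_ftilde hd f) t _)
    exact (hφ i).trans (hmono (Finset.mem_Icc.1 hi).2)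
  rw [Function.iterate_mul]
  exact (monotone_ftilde d φ).iterate_le_of_le hstep N

lemma projRate_iterate_le (hd : 1 ≤ d) (N : ℕ) (f : ℕ → ℕ) (j : ℕ) :
    (projRate d N)^[j + 1] f ≤ (ftilde d f)^[N * (N + 1) ^ j] := by
  induction j with
  | zero => simp [projRate]
  | succ j ih =>
    rw [Function.iterate_succ_apply']
    refine (projRate_le_iterate_of_le hd N ih).trans
      (Function.monotone_iterate_of_id_le (id_le_ftilde hd f) ?_)
    have hpow : 1 ≤ (N + 1) ^ j := Nat.one_le_pow _ _ N.succ_pos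
    calc (N * (N + 1) ^ j + 1) * N = N * (N + 1) ^ j * N + N * 1 := by ring
      _ ≤ N * (N + 1) ^ j * N + N * (N + 1) ^ j := by gcongr
      _ = N * (N + 1) ^ (j + 1) := by ring

lemma ftilde_iterate_le_ftildeI_iterate (hd : 1 ≤ d) (N : ℕ) (f : ℕ → ℕ) (i : ℕ) :
    (ftilde d f)^[N ^ (i + 1)] ≤ (ftildeI d N f i)^[N] := by
  rw [pow_succ, Function.iterate_mul]
  refine ((monotone_ftilde d f).iterate _).iterate_le_of_le (fun m => ?_) N
  rcases Nat.eq_zero_or_pos m with rfl | hm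
  · have hfix : ftilde d f 0 = 0 := by simp [ftilde, fM]
    rw [Function.iterate_fixed hfix]
    exact Nat.zero_le _
  · exact apply_le_ftilde (fIt d N f i) hm (le_sixteen_mul_sq hd m)

lemma one_le_kSeq (hd : 1 ≤ d) (N : ℕ) (f : ℕ → ℕ) : ∀ i, 1 ≤ kSeq d N f i
  | 0 => Function.id_le_iterate_of_id_le (id_le_ftilde hd (fIt d N f 0)) N 1
  | i + 1 => (one_le_kSeq hd N f i).trans
      (Function.id_le_iterate_of_id_le (id_le_ftilde hd (fIt d N f i)) N _)

lemma projRate_iterate_le_kSeq (hd : 1 ≤ d) {N N' : ℕ} (hN : N * (N + 1) ≤ N') (f : ℕ → ℕ)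
    (j : ℕ) :
    (projRate d N)^[j + 1] f 1 ≤ kSeq d N' f j := by
  have hiter := Function.monotone_iterate_of_id_le (id_le_ftilde hd f)
  refine (projRate_iterate_le hd N f j 1).trans ?_
  cases j with
  | zero =>
    have hexp : N * (N + 1) ^ 0 ≤ N' ^ (0 + 1) := by
      simpa using (Nat.le_mul_of_pos_right N N.succ_pos).trans hN
    exact (hiter hexp 1).trans (ftilde_iterate_le_ftildeI_iterate hd N' f 0 1)
  | succ j =>
    have hexp : N * (N + 1) ^ (j + 1) ≤ N' ^ (j + 1) := by
      rcases Nat.eq_zero_or_pos N with rfl | hpos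
      · simp
      · have hN' : N + 1 ≤ N' := (Nat.le_mul_of_pos_left _ hpos).trans hN
        calc N * (N + 1) ^ (j + 1) = (N * (N + 1)) * (N + 1) ^ j := by ring
          _ ≤ N' * N' ^ j := by gcongr
          _ = N' ^ (j + 1) := by ring
    calc (ftilde d f)^[N * (N + 1) ^ (j + 1)] 1 ≤ (ftilde d f)^[N' ^ (j + 1)] 1 := hiter hexp 1
      _ ≤ (ftilde d f)^[N' ^ (j + 1)] (kSeq d N' f j) :=
        (monotone_ftilde d f).iterate _ (one_le_kSeq hd N' f j)
      _ ≤ kSeq d N' f (j + 1) := ftilde_iterate_le_ftildeI_iterate hd N' f j _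

end Iterates

section ApproxProjection

open AffineMap (lineMap)

variable {H : Type*} [NormedAddCommGroup H] [InnerProductSpace ℝ H] {C : Set H} {T G : H → H}

lemma norm_lineMap_sub_sq (x y p : H) (t : ℝ) :
    ‖lineMap x y t - p‖ ^ 2
      = (1 - t) * ‖x - p‖ ^ 2 + t * ‖y - p‖ ^ 2 - t * (1 - t) * ‖x - y‖ ^ 2 := by
  have hz : lineMap x y t - p = (x - p) + t • (y - x) := by
    rw [AffineMap.lineMap_apply_module']
    abel
  have hy : y - p = (x - p) + (y - x) := by abel
  rw [hz, hy, norm_sub_rev x y, norm_add_sq_real, norm_add_sq_real, inner_smul_right, norm_smul,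
    mul_pow, Real.norm_eq_abs, sq_abs]
  ring

lemma norm_lineMap_sub_map_sq_le {x y : H} {t δ : ℝ} (ht : t ∈ Set.Icc (0 : ℝ) 1)
    (hx : ‖x - T x‖ ≤ δ) (hy : ‖y - T y‖ ≤ δ)
    (hTx : ‖T x - T (lineMap x y t)‖ ≤ ‖x - lineMap x y t‖)
    (hTy : ‖T y - T (lineMap x y t)‖ ≤ ‖y - lineMap x y t‖) :
    ‖lineMap x y t - T (lineMap x y t)‖ ^ 2 ≤ δ ^ 2 + δ * ‖x - y‖ := by
  obtain ⟨ht0, ht1⟩ := ht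
  set z := lineMap x y t
  have hδ : 0 ≤ δ := (norm_nonneg _).trans hx
  have hxz : ‖x - z‖ = t * ‖x - y‖ := by
    simpa only [dist_eq_norm, Real.norm_of_nonneg ht0] using dist_left_lineMap x y t
  have hyz : ‖y - z‖ = (1 - t) * ‖x - y‖ := by
    simpa only [dist_eq_norm, Real.norm_of_nonneg (sub_nonneg.2 ht1)] using dist_right_lineMap x y t
  have hxT : ‖x - T z‖ ≤ δ + t * ‖x - y‖ := by
    linarith [norm_sub_le_norm_sub_add_norm_sub x (T x) (T z)]
  have hyT : ‖y - T z‖ ≤ δ + (1 - t) * ‖x - y‖ := by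
    linarith [norm_sub_le_norm_sub_add_norm_sub y (T y) (T z)]
  have hts : 4 * (t * (1 - t)) ≤ 1 := by nlinarith [sq_nonneg (2 * t - 1)]
  have : 0 ≤ 1 - t := sub_nonneg.2 ht1
  calc ‖z - T z‖ ^ 2
      = (1 - t) * ‖x - T z‖ ^ 2 + t * ‖y - T z‖ ^ 2 - t * (1 - t) * ‖x - y‖ ^ 2 :=
        norm_lineMap_sub_sq x y (T z) t
    _ ≤ (1 - t) * (δ + t * ‖x - y‖) ^ 2 + t * (δ + (1 - t) * ‖x - y‖) ^ 2
        - t * (1 - t) * ‖x - y‖ ^ 2 := by gcongr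
    _ = δ ^ 2 + 4 * (t * (1 - t)) * (δ * ‖x - y‖) := by ring
    _ ≤ δ ^ 2 + 1 * (δ * ‖x - y‖) := by gcongr
    _ = δ ^ 2 + δ * ‖x - y‖ := by rw [one_mul]

lemma lineMap_mem_approxFixedPoints {d : ℕ} (hd : 1 ≤ d) (hcv : Convex ℝ C)
    (hbd : ∀ x ∈ C, ∀ y ∈ C, ‖x - y‖ ≤ d) (hT : ∀ x ∈ C, ∀ y ∈ C, ‖T x - T y‖ ≤ ‖x - y‖)
    {m : ℕ} {x y : H} (hx : x ∈ approxFixedPoints C T (16 * d * m ^ 2))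
    (hy : y ∈ approxFixedPoints C T (16 * d * m ^ 2)) {t : ℝ} (ht : t ∈ Set.Icc (0 : ℝ) 1) :
    lineMap x y t ∈ approxFixedPoints C T m := by
  obtain ⟨hxC, hx⟩ := hx
  obtain ⟨hyC, hy⟩ := hy
  have hzC : lineMap x y t ∈ C := hcv.lineMap_mem hxC hyC ht
  refine ⟨hzC, ?_⟩
  set z := lineMap x y t
  set δ := max ‖x - T x‖ ‖y - T y‖
  have hz : ‖z - T z‖ ^ 2 ≤ δ ^ 2 + δ * ‖x - y‖ :=
    norm_lineMap_sub_map_sq_le ht (le_max_left _ _) (le_max_right _ _)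
      (hT x hxC z hzC) (hT y hyC z hzC)
  have : 0 ≤ δ := (norm_nonneg _).trans (le_max_left _ _)
  have hδ : 16 * d * m ^ 2 * δ ≤ 1 := by
    push_cast at hx hy
    rcases max_choice ‖x - T x‖ ‖y - T y‖ with h | h <;> simpa only [δ, h]
  have hd' : (1 : ℝ) ≤ d := by exact_mod_cast hd
  have hmm : (m : ℝ) ≤ m ^ 2 := by exact_mod_cast Nat.le_self_pow two_ne_zero m
  have hmδ : m * δ ≤ 1 / 16 := by
    have : (m : ℝ) ^ 2 * δ ≤ d * (m ^ 2 * δ) := le_mul_of_one_le_left (by positivity) hd'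
    have : m * δ ≤ m ^ 2 * δ := by gcongr
    linarith
  have hsq : (m * ‖z - T z‖) ^ 2 ≤ 1 ^ 2 :=
    calc (m * ‖z - T z‖) ^ 2 = m ^ 2 * ‖z - T z‖ ^ 2 := mul_pow _ _ 2
      _ ≤ m ^ 2 * (δ ^ 2 + δ * d) := by
        gcongr
        exact hz.trans (by gcongr; exact hbd x hxC y hyC)
      _ = (m * δ) ^ 2 + 16 * d * m ^ 2 * δ / 16 := by ring
      _ ≤ (1 / 16) ^ 2 + 1 / 16 := by gcongr
      _ ≤ 1 ^ 2 := by norm_num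
  exact le_of_sq_le_sq hsq zero_le_one

/-- `x` is a projection of `u` onto `S` up to `e`, in the sense of the variational inequality which
characterizes the metric projection onto a convex set. Membership `x ∈ S` is not part of the
notion. -/
def IsApproxProj (S : Set H) (e : ℝ) (u x : H) : Prop :=
  ∀ y ∈ S, ⟪u - x, y - x⟫ ≤ e

lemma IsApproxProj.of_norm_sub_le {S : Set H} {e d : ℝ} {u u' x : H} (h : IsApproxProj S e u x)
    (hd : ∀ y ∈ S, ‖y - x‖ ≤ d) : IsApproxProj S (e + ‖u' - u‖ * d) u' x := by
  intro y hy
  calc ⟪u' - x, y - x⟫ = ⟪u - x, y - x⟫ + ⟪u' - u, y - x⟫ := by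
        rw [← inner_add_left]
        congr 1
        abel
    _ ≤ e + ‖u' - u‖ * ‖y - x‖ := add_le_add (h y hy) (real_inner_le_norm _ _)
    _ ≤ e + ‖u' - u‖ * d := by gcongr; exact hd y hy

lemma norm_sub_le_of_inner_sub_le {a b x y : H} {e : ℝ} (hx : ⟪a - x, y - x⟫ ≤ e)
    (hy : ⟪b - y, x - y⟫ ≤ e) : ‖y - x‖ ≤ ‖b - a‖ + √(2 * e) := by
  have hsum : ‖y - x‖ ^ 2 = ⟪a - x, y - x⟫ + ⟪b - y, x - y⟫ + ⟪b - a, y - x⟫ := by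
    rw [← neg_sub y x, inner_neg_right, ← sub_eq_add_neg, ← inner_sub_left, ← inner_add_left,
      ← real_inner_self_eq_norm_sq]
    congr 1
    abel
  have hquad : ‖y - x‖ * (‖y - x‖ - ‖b - a‖) ≤ 2 * e := by
    linarith [real_inner_le_norm (b - a) (y - x)]
  by_contra! hlt
  have hgap : √(2 * e) < ‖y - x‖ - ‖b - a‖ := by linarith
  have hgap0 : 0 < ‖y - x‖ - ‖b - a‖ := (Real.sqrt_nonneg _).trans_lt hgap
  nlinarith [Real.lt_sq_of_sqrt_lt hgap, mul_nonneg (norm_nonneg (b - a)) hgap0.le]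

lemma norm_sub_lineMap_sq_lt {u x y : H} {e d : ℝ} (he : 0 < e) (hd : 0 < d) (hxy : ‖y - x‖ ≤ d)
    (hu : e < ⟪u - x, y - x⟫) :
    ‖u - lineMap x y (e / d ^ 2)‖ ^ 2 < ‖u - x‖ ^ 2 - e ^ 2 / d ^ 2 := by
  set t := e / d ^ 2 with ht
  have ht0 : 0 < t := by positivity
  have hz : u - lineMap x y t = (u - x) - t • (y - x) := by
    rw [AffineMap.lineMap_apply_module']
    abel
  have hinner : t * e < t * ⟪u - x, y - x⟫ := by gcongr
  have hsq : (t * ‖y - x‖) ^ 2 ≤ (t * d) ^ 2 := by gcongr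
  calc ‖u - lineMap x y t‖ ^ 2
      = ‖u - x‖ ^ 2 - 2 * (t * ⟪u - x, y - x⟫) + (t * ‖y - x‖) ^ 2 := by
        rw [hz, norm_sub_sq_real, inner_smul_right, norm_smul, Real.norm_of_nonneg ht0.le]
    _ < ‖u - x‖ ^ 2 - 2 * (t * e) + (t * d) ^ 2 := by linarith
    _ = ‖u - x‖ ^ 2 - e ^ 2 / d ^ 2 := by
        rw [ht]
        field_simp
        ring

lemma exists_isApproxProj_of_norm_sq_lt {d : ℕ} (hd : 1 ≤ d) (hcv : Convex ℝ C)
    (hbd : ∀ x ∈ C, ∀ y ∈ C, ‖x - y‖ ≤ d) (hT : ∀ x ∈ C, ∀ y ∈ C, ‖T x - T y‖ ≤ ‖x - y‖)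
    {e : ℝ} (he : 0 < e) (hed : e ≤ (d : ℝ) ^ 2) (φ : ℕ → ℕ) {k : ℕ} (hk : 1 ≤ k) (u : H) (N : ℕ) :
    ∀ x ∈ approxFixedPoints C T (projRate d N φ k), ‖u - x‖ ^ 2 < N * (e ^ 2 / (d : ℝ) ^ 2) →
      ∃ m, k ≤ m ∧ max m (φ m) ≤ projRate d N φ k ∧
        ∃ x' ∈ approxFixedPoints C T (max m (φ m)),
          IsApproxProj (approxFixedPoints C T m) e u x' := by
  have hd0 : (0 : ℝ) < d := by exact_mod_cast hd
  induction N with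
  | zero =>
    intro x _ hx
    rw [Nat.cast_zero, zero_mul] at hx
    exact absurd hx (sq_nonneg _).not_gt
  | succ N ih =>
    intro x hx hux
    have hsucc : projRate d (N + 1) φ k = ftilde d φ (projRate d N φ k) :=
      Function.iterate_succ_apply' _ _ _
    set n := projRate d N φ k
    have hkn : k ≤ n := Function.id_le_iterate_of_id_le (id_le_ftilde hd φ) N k
    have hle : 16 * d * n ^ 2 ≤ ftilde d φ n := le_max_right _ _
    have hnn := le_sixteen_mul_sq hd n
    have hmax : max (16 * d * n ^ 2) (φ (16 * d * n ^ 2)) ≤ ftilde d φ n :=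
      max_le hle (apply_le_ftilde φ (hk.trans (hkn.trans hnn)) le_rfl)
    rw [hsucc] at hx ⊢
    have hanti := antitone_approxFixedPoints C T
    by_cases hproj : IsApproxProj (approxFixedPoints C T (16 * d * n ^ 2)) e u x
    · exact ⟨16 * d * n ^ 2, hkn.trans hnn, hmax, x, hanti hmax hx, hproj⟩
    · simp only [IsApproxProj, not_forall, not_le] at hproj
      obtain ⟨y, hy, hxy⟩ := hproj
      have ht : e / (d : ℝ) ^ 2 ∈ Set.Icc (0 : ℝ) 1 :=
        ⟨by positivity, (div_le_one (by positivity)).2 hed⟩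
      have hdescent := norm_sub_lineMap_sq_lt he hd0 (hbd y hy.1 x hx.1) hxy
      push_cast at hux
      obtain ⟨m, hkm, hm, hx'⟩ := ih _
        (lineMap_mem_approxFixedPoints hd hcv hbd hT (hanti hle hx) hy ht) (by linarith)
      exact ⟨m, hkm, hm.trans (id_le_ftilde hd φ n), hx'⟩

lemma exists_isApproxProj {d : ℕ} (hd : 1 ≤ d) (hcv : Convex ℝ C)
    (hbd : ∀ x ∈ C, ∀ y ∈ C, ‖x - y‖ ≤ d) (hT : ∀ x ∈ C, ∀ y ∈ C, ‖T x - T y‖ ≤ ‖x - y‖)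
    (hne : ∀ n, (approxFixedPoints C T n).Nonempty) {e : ℝ} (he : 0 < e) (hed : e ≤ (d : ℝ) ^ 2)
    {N : ℕ} (hN : (d : ℝ) ^ 4 < N * e ^ 2) (φ : ℕ → ℕ) {k : ℕ} (hk : 1 ≤ k) {u : H} (hu : u ∈ C) :
    ∃ m, k ≤ m ∧ max m (φ m) ≤ projRate d N φ k ∧
      ∃ x ∈ approxFixedPoints C T (max m (φ m)),
        IsApproxProj (approxFixedPoints C T m) e u x := by
  have : (0 : ℝ) < d := by exact_mod_cast hd
  obtain ⟨p, hp⟩ := hne (projRate d N φ k)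
  refine exists_isApproxProj_of_norm_sq_lt hd hcv hbd hT he hed φ hk u N p hp ?_
  calc ‖u - p‖ ^ 2 ≤ (d : ℝ) ^ 2 := by gcongr; exact hbd u hu p hp.1
    _ = (d : ℝ) ^ 4 / (d : ℝ) ^ 2 := by field_simp
    _ < N * e ^ 2 / (d : ℝ) ^ 2 := by gcongr
    _ = N * (e ^ 2 / (d : ℝ) ^ 2) := mul_div_assoc _ _ _

lemma exists_isApproxProj_picard {d : ℕ} (hd : 1 ≤ d) (hcv : Convex ℝ C)
    (hbd : ∀ x ∈ C, ∀ y ∈ C, ‖x - y‖ ≤ d) (hT : ∀ x ∈ C, ∀ y ∈ C, ‖T x - T y‖ ≤ ‖x - y‖)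
    (hne : ∀ n, (approxFixedPoints C T n).Nonempty) {τ : ℝ} (hτ0 : 0 ≤ τ) (hτ1 : τ < 1)
    (hGm : Set.MapsTo G C C) (hG : ∀ x ∈ C, ∀ y ∈ C, ‖G x - G y‖ ≤ τ * ‖x - y‖)
    {e : ℝ} (he : 0 < e) (hed : e ≤ (d : ℝ) ^ 2) {N : ℕ} (hN : (d : ℝ) ^ 4 < N * e ^ 2)
    {r : ℝ} (hr : √(2 * e) ≤ (1 - τ) * r) (j : ℕ) :
    ∀ φ : ℕ → ℕ, ∃ m, 1 ≤ m ∧ max m (φ m) ≤ (projRate d N)^[j + 1] φ 1 ∧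
      ∃ x ∈ approxFixedPoints C T (max m (φ m)), ∃ u ∈ C,
        ‖x - u‖ ≤ τ ^ j * d + r ∧ IsApproxProj (approxFixedPoints C T m) e (G u) x := by
  induction j with
  | zero =>
    intro φ
    obtain ⟨p, hp, -⟩ := hne 0
    obtain ⟨m, hm, hmφ, x, hx, hproj⟩ :=
      exists_isApproxProj hd hcv hbd hT hne he hed hN φ le_rfl (hGm hp)
    have hr0 : 0 ≤ r :=
      nonneg_of_mul_nonneg_right ((Real.sqrt_nonneg _).trans hr) (sub_pos.2 hτ1)
    refine ⟨m, hm, hmφ, x, hx, p, hp, ?_, hproj⟩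
    rw [pow_zero, one_mul]
    exact (hbd x hx.1 p hp).trans (le_add_of_nonneg_right hr0)
  | succ j ih =>
    intro φ
    obtain ⟨m, hm, hmφ, x, hx, u, hu, hxu, hproj⟩ := ih (projRate d N φ)
    obtain ⟨m', hmm', hm'φ, x', hx', hproj'⟩ :=
      exists_isApproxProj hd hcv hbd hT hne he hed hN φ hm (hGm hx.1)
    have hanti := antitone_approxFixedPoints C T
    refine ⟨m', hm.trans hmm', ?_, x', hx', x, hx.1, ?_, hproj'⟩
    · rw [Function.iterate_succ_apply]
      exact hm'φ.trans ((le_max_right _ _).trans hmφ)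
    · have hx'm : x' ∈ approxFixedPoints C T m := hanti (hmm'.trans (le_max_left _ _)) hx'
      have hxm' : x ∈ approxFixedPoints C T m' :=
        hanti ((le_max_left _ _).trans (hm'φ.trans (le_max_right _ _))) hx
      calc ‖x' - x‖ ≤ ‖G x - G u‖ + √(2 * e) :=
            norm_sub_le_of_inner_sub_le (hproj x' hx'm) (hproj' x hxm')
        _ ≤ τ * (τ ^ j * d + r) + (1 - τ) * r := by
            gcongr
            exact (hG x hx.1 u hu).trans (by gcongr)
        _ = τ ^ (j + 1) * d + r := by ring

end ApproxProjection

section Parameters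

/-- The tolerance `ε₁ = (1 - τ) (ε / 2)² / 2` in the variational inequality for the approximate
fixed point of `P ∘ G`. -/
noncomputable def fixTol (ε τ : ℝ) : ℝ := (1 - τ) * (ε / 2) ^ 2 / 2

/-- The quantity `ε̃` of `KXi`, as a function of the tolerance `e = ε₁`; the single projections are
computed up to `d * ε̃`. -/
noncomputable def projTol (d : ℕ) (τ e : ℝ) : ℝ :=
  (1 - τ) ^ 2 / (6 + 8 * (d : ℝ)) * (e ^ 2 / (2 * (d : ℝ) ^ 2))

variable {d : ℕ} {τ e : ℝ}

lemma fixTol_pos {ε : ℝ} (hτ1 : τ < 1) (hε : 0 < ε) : 0 < fixTol ε τ := by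
  have := sub_pos.2 hτ1
  unfold fixTol
  positivity

lemma fixTol_le_sq {ε D : ℝ} (hτ0 : 0 ≤ τ) (hε : 0 ≤ ε) (hεD : ε ≤ D) :
    fixTol ε τ ≤ D ^ 2 / 8 := by
  calc fixTol ε τ = (1 - τ) * (ε ^ 2 / 8) := by unfold fixTol; ring
    _ ≤ 1 * (D ^ 2 / 8) := by gcongr; linarith
    _ = D ^ 2 / 8 := one_mul _

lemma projTol_pos (hd : 1 ≤ d) (hτ1 : τ < 1) (he : 0 < e) : 0 < projTol d τ e := by
  have := sub_pos.2 hτ1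
  unfold projTol
  positivity

lemma two_mul_projTol_le_sq (hd : 1 ≤ d) (τ e : ℝ) :
    2 * (d * projTol d τ e) ≤ ((1 - τ) * (e / (2 * d))) ^ 2 := by
  have : (0 : ℝ) < d := by exact_mod_cast hd
  calc 2 * (d * projTol d τ e) = ((1 - τ) * e) ^ 2 * (1 / (d * (6 + 8 * d))) := by
        unfold projTol
        field_simp
    _ ≤ ((1 - τ) * e) ^ 2 * (1 / (4 * d ^ 2)) := by
        have hden : 4 * (d : ℝ) ^ 2 ≤ d * (6 + 8 * d) := by nlinarith
        gcongr
    _ = ((1 - τ) * (e / (2 * d))) ^ 2 := by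
        field_simp
        norm_num

lemma mul_projTol_le (hd : 1 ≤ d) (hτ0 : 0 ≤ τ) (hτ1 : τ < 1) (he : 0 < e)
    (hed : e ≤ (d : ℝ) ^ 2 / 8) : d * projTol d τ e ≤ e / 8 := by
  have : (0 : ℝ) < d := by exact_mod_cast hd
  have : 0 ≤ 1 - τ := sub_nonneg.2 hτ1.le
  have hsq : ((1 - τ) * (e / (2 * d))) ^ 2 ≤ e / 4 :=
    calc ((1 - τ) * (e / (2 * d))) ^ 2 ≤ (1 * (e / (2 * d))) ^ 2 := by gcongr; linarith
      _ = e * e / (4 * d ^ 2) := by ring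
      _ ≤ e * d ^ 2 / (4 * d ^ 2) := by gcongr; linarith [sq_nonneg (d : ℝ)]
      _ = e / 4 := by field_simp
  linarith [two_mul_projTol_le_sq hd τ e]

lemma exists_descent_count (hd : 1 ≤ d) {δ : ℝ} (hδ : 0 < δ) (hδd : δ ≤ d) :
    ∃ N : ℕ, (d : ℝ) ^ 4 < N * (d * δ) ^ 2 ∧ N * (N + 1) ≤ ⌈8 * (d : ℝ) ^ 4 / δ ^ 4⌉₊ := by
  have : (0 : ℝ) < d := by exact_mod_cast hd
  set q := (d : ℝ) ^ 2 / δ ^ 2 with hq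
  have hq1 : 1 ≤ q := by
    rw [hq, one_le_div (by positivity)]
    gcongr
  have hfloor : (⌊q⌋₊ : ℝ) ≤ q := Nat.floor_le (by positivity)
  refine ⟨⌊q⌋₊ + 1, ?_, ?_⟩
  · calc (d : ℝ) ^ 4 = q * (d * δ) ^ 2 := by
          rw [hq]
          field_simp
      _ < (⌊q⌋₊ + 1 : ℕ) * (d * δ) ^ 2 := by
          gcongr
          exact_mod_cast Nat.lt_floor_add_one q
  · have hbound : ((⌊q⌋₊ + 1) * (⌊q⌋₊ + 1 + 1) : ℝ) ≤ ⌈8 * (d : ℝ) ^ 4 / δ ^ 4⌉₊ :=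
      calc ((⌊q⌋₊ + 1) * (⌊q⌋₊ + 1 + 1) : ℝ) ≤ (q + 1) * (q + 1 + 1) := by gcongr
        _ ≤ 8 * q ^ 2 := by nlinarith
        _ = 8 * (d : ℝ) ^ 4 / δ ^ 4 := by
          rw [hq]
          ring
        _ ≤ ⌈8 * (d : ℝ) ^ 4 / δ ^ 4⌉₊ := Nat.le_ceil _
    exact_mod_cast hbound

lemma pow_sInf_succ_le (hτ0 : 0 ≤ τ) (hτ1 : τ < 1) {c : ℝ} (hc : 0 < c) :
    τ ^ (sInf {i : ℕ | τ ^ (i + 1) ≤ c} + 1) ≤ c := by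
  refine Nat.sInf_mem (s := {i : ℕ | τ ^ (i + 1) ≤ c}) ?_
  obtain ⟨n, hn⟩ := exists_pow_lt_of_lt_one hc hτ1
  exact ⟨n, (pow_le_pow_of_le_one hτ0 hτ1.le n.le_succ).trans hn.le⟩

lemma le_fM0 (F : ℕ → ℕ) {i n : ℕ} (hi : i ≤ n) : F i ≤ fM0 F n :=
  Finset.le_sup (f := F) (Finset.mem_range_succ_iff.2 hi)

lemma le_fixTol_mul_fXi {ε l : ℝ} (hτ1 : τ < 1) (hε : 0 < ε) {g χ h : ℕ → ℕ} {k i : ℕ}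
    (hi : i ≤ fM0 (gTil g) (χ (d * k))) (hh : 1 ≤ h i) (hl : 1 / (h i : ℝ) ≤ l) :
    d ≤ fixTol ε τ * l * fXi ε τ g χ h d k := by
  have : 0 < 1 - τ := sub_pos.2 hτ1
  have hpos := fixTol_pos hτ1 hε
  set M := fM0 h (fM0 (gTil g) (χ (d * k)))
  have hhi : h i ≤ M := le_fM0 h hi
  have hhi0 : (0 : ℝ) < h i := by exact_mod_cast hh
  have hl0 : 0 ≤ l := le_trans (by positivity) hl
  have hMl : 1 ≤ M * l :=
    calc (1 : ℝ) ≤ l * h i := (div_le_iff₀ hhi0).1 hl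
      _ ≤ l * M := by gcongr
      _ = M * l := mul_comm _ _
  calc (d : ℝ) ≤ 3 * d * (M * l) := by nlinarith [Nat.cast_nonneg (α := ℝ) d]
    _ = fixTol ε τ * l * (6 * d * M / ((1 - τ) * (ε / 2) ^ 2)) := by
        unfold fixTol
        field_simp
        ring
    _ ≤ fixTol ε τ * l * fXi ε τ g χ h d k := by
        gcongr
        exact Nat.le_ceil _

end Parameters

section Resolvent

variable {H : Type*} [NormedAddCommGroup H] [InnerProductSpace ℝ H] {C : Set H} {T G : H → H}

lemma exists_isApproxProj_self {d : ℕ} (hd : 1 ≤ d) (hcv : Convex ℝ C)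
    (hbd : ∀ x ∈ C, ∀ y ∈ C, ‖x - y‖ ≤ d) (hT : ∀ x ∈ C, ∀ y ∈ C, ‖T x - T y‖ ≤ ‖x - y‖)
    (hne : ∀ n, (approxFixedPoints C T n).Nonempty) {τ : ℝ} (hτ0 : 0 ≤ τ) (hτ1 : τ < 1)
    (hGm : Set.MapsTo G C C) (hG : ∀ x ∈ C, ∀ y ∈ C, ‖G x - G y‖ ≤ τ * ‖x - y‖)
    {e : ℝ} (he : 0 < e) (hed : e ≤ (d : ℝ) ^ 2 / 8) (f : ℕ → ℕ) :
    ∃ m ≤ Kdef d τ (projTol d τ e) f, ∃ x ∈ approxFixedPoints C T (f m),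
      IsApproxProj (approxFixedPoints C T m) e (G x) x := by
  have hd1 : (1 : ℝ) ≤ d := by exact_mod_cast hd
  set δ := projTol d τ e
  have hδ0 : 0 < δ := projTol_pos hd hτ1 he
  have hδe : d * δ ≤ e / 8 := mul_projTol_le hd hτ0 hτ1 he hed
  have hδd : δ ≤ d * δ := le_mul_of_one_le_left hδ0.le hd1
  have hr : √(2 * (d * δ)) ≤ (1 - τ) * (e / (2 * d)) :=
    Real.sqrt_le_iff.2 ⟨mul_nonneg (sub_nonneg.2 hτ1.le) (by positivity),
      two_mul_projTol_le_sq hd τ e⟩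
  obtain ⟨N, hdN, hN⟩ := exists_descent_count hd hδ0 (by nlinarith : δ ≤ d)
  set i := sInf {i : ℕ | τ ^ (i + 1) ≤ δ / (6 * (d : ℝ) ^ 2)}
  have hτi : τ ^ (i + 1) ≤ δ / (6 * (d : ℝ) ^ 2) := pow_sInf_succ_le hτ0 hτ1 (by positivity)
  obtain ⟨m, -, hmK, x, hx, u, hu, hxu, hproj⟩ := exists_isApproxProj_picard hd hcv hbd hT hne
    hτ0 hτ1 hGm hG (by positivity : 0 < d * δ) (by linarith [sq_nonneg (d : ℝ)]) hdN hr i f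
  refine ⟨m, (le_max_left _ _).trans (hmK.trans (projRate_iterate_le_kSeq hd hN f i)), x,
    antitone_approxFixedPoints C T (le_max_right _ _) hx, fun y hy => ?_⟩
  refine (hproj.of_norm_sub_le (fun z hz => hbd z hz.1 x hx.1) y hy).trans ?_
  calc d * δ + ‖G x - G u‖ * d ≤ d * δ + τ * (τ ^ i * d + e / (2 * d)) * d := by
        gcongr
        exact (hG x hx.1 u hu).trans (by gcongr)
    _ = d * δ + τ ^ (i + 1) * d ^ 2 + τ * (e / 2) := by
        field_simp
        ring
    _ ≤ e / 8 + δ / (6 * (d : ℝ) ^ 2) * d ^ 2 + 1 * (e / 2) := by gcongr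
    _ = e / 8 + δ / 6 + e / 2 := by field_simp
    _ ≤ e := by linarith

lemma neg_mul_le_inner_sub_map {w x : H} (hT : ‖T w - T x‖ ≤ ‖w - x‖) :
    -(‖x - T x‖ * ‖w - x‖) ≤ ⟪w - T w, w - x⟫ := by
  have hsplit : ⟪w - T w, w - x⟫ = ‖w - x‖ ^ 2 - ⟪T w - T x, w - x⟫ + ⟪x - T x, w - x⟫ := by
    rw [← real_inner_self_eq_norm_sq, ← inner_sub_left, ← inner_add_left]
    congr 1
    abel
  have hcontr : ⟪T w - T x, w - x⟫ ≤ ‖w - x‖ * ‖w - x‖ :=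
    (real_inner_le_norm _ _).trans (by gcongr)
  linarith [neg_le_of_abs_le (abs_real_inner_le_norm (x - T x) (w - x))]

lemma mul_inner_resolvent_sub_le {w x q : H} {l : ℝ} (hl1 : l ≤ 1)
    (hw : w = (1 - l) • T w + l • q) (hT : ‖T w - T x‖ ≤ ‖w - x‖) :
    l * ⟪w - q, w - x⟫ ≤ (1 - l) * (‖x - T x‖ * ‖w - x‖) := by
  have hq : l • (w - q) = -((1 - l) • (w - T w)) := by
    refine eq_neg_of_add_eq_zero_left ?_
    calc l • (w - q) + (1 - l) • (w - T w) = w - T w - l • (q - T w) := by module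
      _ = 0 := sub_eq_zero.2 (resolvent_sub_map hw)
  rw [← real_inner_smul_left, hq, inner_neg_left, real_inner_smul_left, ← mul_neg]
  have := neg_mul_le_inner_sub_map hT
  gcongr
  linarith

lemma mul_norm_resolvent_sub_sq_le {w x : H} {l τ e : ℝ} (hl0 : 0 ≤ l) (hl1 : l ≤ 1) (hτ0 : 0 ≤ τ)
    (hτ1 : τ ≤ 1) (hw : w = (1 - l) • T w + l • G (T w)) (hT : ‖T w - T x‖ ≤ ‖w - x‖)
    (hG : ‖G (T w) - G x‖ ≤ τ * ‖T w - x‖) (hx : ⟪G x - x, w - x⟫ ≤ e) :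
    l * ((1 - τ) * ‖w - x‖ ^ 2) ≤ l * e + ‖x - T x‖ * ‖w - x‖ := by
  have hsplit : ‖w - x‖ ^ 2
      = ⟪w - G (T w), w - x⟫ + ⟪G (T w) - G x, w - x⟫ + ⟪G x - x, w - x⟫ := by
    rw [← real_inner_self_eq_norm_sq, ← inner_add_left, ← inner_add_left]
    congr 1
    abel
  have hGT : ⟪G (T w) - G x, w - x⟫ ≤ τ * ‖w - x‖ ^ 2 + ‖x - T x‖ * ‖w - x‖ :=
    calc ⟪G (T w) - G x, w - x⟫ ≤ ‖G (T w) - G x‖ * ‖w - x‖ := real_inner_le_norm _ _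
      _ ≤ τ * (‖w - x‖ + ‖x - T x‖) * ‖w - x‖ := by
          gcongr
          refine hG.trans (mul_le_mul_of_nonneg_left ?_ hτ0)
          rw [norm_sub_rev x (T x)]
          linarith [norm_sub_le_norm_sub_add_norm_sub (T w) (T x) x]
      _ = τ * ‖w - x‖ ^ 2 + τ * (‖x - T x‖ * ‖w - x‖) := by ring
      _ ≤ τ * ‖w - x‖ ^ 2 + 1 * (‖x - T x‖ * ‖w - x‖) := by gcongr
      _ = τ * ‖w - x‖ ^ 2 + ‖x - T x‖ * ‖w - x‖ := by rw [one_mul]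
  have hwG := mul_inner_resolvent_sub_le hl1 hw hT
  calc l * ((1 - τ) * ‖w - x‖ ^ 2) = l * (‖w - x‖ ^ 2 - τ * ‖w - x‖ ^ 2) := by ring
    _ ≤ l * (⟪w - G (T w), w - x⟫ + ‖x - T x‖ * ‖w - x‖ + e) := by
        gcongr
        linarith
    _ ≤ l * e + ‖x - T x‖ * ‖w - x‖ := by linarith

lemma norm_resolvent_sub_le {w x : H} {l τ ε d : ℝ} {n : ℕ} (hl0 : 0 < l) (hl1 : l ≤ 1)
    (hτ0 : 0 ≤ τ) (hτ1 : τ < 1) (hε : 0 < ε) (hw : w = (1 - l) • T w + l • G (T w))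
    (hT : ‖T w - T x‖ ≤ ‖w - x‖) (hG : ‖G (T w) - G x‖ ≤ τ * ‖T w - x‖)
    (hd : ‖w - x‖ ≤ d) (hx : x ∈ approxFixedPoints C T n) (hn : d ≤ fixTol ε τ * l * n)
    (hproj : ⟪G x - x, w - x⟫ ≤ fixTol ε τ) : ‖w - x‖ ≤ ε / 2 := by
  have : 0 < 1 - τ := sub_pos.2 hτ1
  have hpos := fixTol_pos hτ1 hε
  have hdefect : ‖x - T x‖ * ‖w - x‖ ≤ l * fixTol ε τ :=
    calc ‖x - T x‖ * ‖w - x‖ ≤ ‖x - T x‖ * (fixTol ε τ * l * n) := by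
          gcongr
          exact hd.trans hn
      _ = l * fixTol ε τ * (n * ‖x - T x‖) := by ring
      _ ≤ l * fixTol ε τ * 1 := by
          gcongr
          exact hx.2
      _ = l * fixTol ε τ := mul_one _
  have hsq : l * (1 - τ) * ‖w - x‖ ^ 2 ≤ l * (1 - τ) * (ε / 2) ^ 2 := by
    have hmain := mul_norm_resolvent_sub_sq_le hl0.le hl1 hτ0 hτ1.le hw hT hG hproj
    unfold fixTol at hmain hdefect
    linarith
  exact le_of_sq_le_sq (le_of_mul_le_mul_left hsq (by positivity)) (by positivity)

end Resolvent

theorem resolvent_metastable_single_general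
    {H : Type*} [NormedAddCommGroup H] [InnerProductSpace ℝ H]
    (d : ℕ) (hd : 1 ≤ d) (C : Set H) (hcv : Convex ℝ C)
    (hbd : ∀ x ∈ C, ∀ y ∈ C, ‖x - y‖ ≤ (d : ℝ))
    (T : H → H) (hTm : Set.MapsTo T C C)
    (hT : ∀ x ∈ C, ∀ y ∈ C, ‖T x - T y‖ ≤ ‖x - y‖)
    (τ : ℝ) (hτ0 : 0 ≤ τ) (hτ1 : τ < 1)
    (G : H → H) (hGm : Set.MapsTo G C C)
    (hG : ∀ x ∈ C, ∀ y ∈ C, ‖G x - G y‖ ≤ τ * ‖x - y‖)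
    (lam : ℕ → ℝ) (hlam : ∀ n, lam n ∈ Set.Ioc (0 : ℝ) 1)
    (h : ℕ → ℕ) (hh : ∀ n, 1 ≤ h n) (hlamh : ∀ n, 1 / (h n : ℝ) ≤ lam n)
    (χ : ℕ → ℕ) (hχ : ∀ n : ℕ, ∀ i ≥ χ n, lam i ≤ 1 / ((n : ℝ) + 1))
    (v : ℕ → H) (hvC : ∀ n, v n ∈ C)
    (hv : ∀ n, v n = (1 - lam n) • T (v n) + lam n • G (T (v n)))
    (ε : ℝ) (hε : 0 < ε) (g : ℕ → ℕ) :
    ∃ j ≤ XiDef ε g χ h d τ, ‖v j - v (gTil g j)‖ ≤ ε := by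
  rcases le_total (d : ℝ) ε with hdε | hεd
  · exact ⟨0, Nat.zero_le _, (hbd _ (hvC _) _ (hvC _)).trans hdε⟩
  have hres : ∀ n, ∀ i ≥ χ (d * n), v i ∈ approxFixedPoints C T n := fun n i hi =>
    resolvent_mem_approxFixedPoints (hv i) (hvC i) (hlam i).1.le
      (hbd _ (hGm (hTm (hvC i))) _ (hTm (hvC i))) (hχ _ i hi)
  obtain ⟨m, hmK, x, hx, hproj⟩ := exists_isApproxProj_self hd hcv hbd hT
    (fun n => ⟨_, hres n _ le_rfl⟩) hτ0 hτ1 hGm hG (fixTol_pos hτ1 hε)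
    (fixTol_le_sq hτ0 hε.le hεd) (fXi ε τ g χ h d)
  obtain ⟨j, hjm, hjK, hj⟩ : ∃ j ≤ χ (d * m), j ≤ XiDef ε g χ h d τ ∧
      ∀ i ≥ j, v i ∈ approxFixedPoints C T m := by
    rcases le_total (χ (d * m)) (XiDef ε g χ h d τ) with hle | hle
    · exact ⟨_, le_rfl, hle, hres m⟩
    · exact ⟨_, hle, le_rfl, fun i hi => antitone_approxFixedPoints C T hmK (hres _ i hi)⟩
  have hclose : ∀ i ≥ j, i ≤ fM0 (gTil g) (χ (d * m)) → ‖v i - x‖ ≤ ε / 2 := fun i hji hi =>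
    norm_resolvent_sub_le (hlam i).1 (hlam i).2 hτ0 hτ1 hε (hv i) (hT _ (hvC i) _ hx.1)
      (hG _ (hTm (hvC i)) _ hx.1) (hbd _ (hvC i) _ hx.1) hx
      (le_fixTol_mul_fXi hτ1 hε hi (hh i) (hlamh i)) (hproj _ (hj i hji))
  have hjg : j ≤ gTil g j := le_max_left _ _
  have hgM : gTil g j ≤ fM0 (gTil g) (χ (d * m)) := le_fM0 _ hjm
  refine ⟨j, hjK, ?_⟩
  calc ‖v j - v (gTil g j)‖ ≤ ‖v j - x‖ + ‖v (gTil g j) - x‖ := by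
        rw [norm_sub_rev (v (gTil g j)) x]
        exact norm_sub_le_norm_sub_add_norm_sub _ _ _
    _ ≤ ε / 2 + ε / 2 := add_le_add (hclose j le_rfl (hjg.trans hgM)) (hclose _ hjg hgM)
    _ = ε := add_halves ε

/-- Rate of metastability (against `g̃`) for the resolvent sequence
`v_n = (1−λ_n)·T(v_n) + λ_n·G(T(v_n))` of the hybrid steepest descent method. -/
theorem resolvent_metastable_single
    {H : Type*} [NormedAddCommGroup H] [InnerProductSpace ℝ H] [CompleteSpace H]
    (d : ℕ) (hd : 1 ≤ d)
    (C : Set H) (hne : C.Nonempty) (hcl : IsClosed C) (hcv : Convex ℝ C)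
    (hbd : ∀ x ∈ C, ∀ y ∈ C, ‖x - y‖ ≤ (d : ℝ))
    (T : H → H) (hTm : Set.MapsTo T C C)
    (hT : ∀ x ∈ C, ∀ y ∈ C, ‖T x - T y‖ ≤ ‖x - y‖)
    (hfix : ∃ p ∈ C, T p = p)
    (τ : ℝ) (hτ0 : 0 ≤ τ) (hτ1 : τ < 1)
    (G : H → H) (hGm : Set.MapsTo G C C)
    (hG : ∀ x ∈ C, ∀ y ∈ C, ‖G x - G y‖ ≤ τ * ‖x - y‖)
    (lam : ℕ → ℝ) (hlam : ∀ n, lam n ∈ Set.Ioc (0 : ℝ) 1)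
    (h : ℕ → ℕ) (hh : ∀ n, 1 ≤ h n) (hlamh : ∀ n, 1 / (h n : ℝ) ≤ lam n)
    (χ : ℕ → ℕ) (hχ : ∀ n : ℕ, ∀ i ≥ χ n, lam i ≤ 1 / ((n : ℝ) + 1))
    (v : ℕ → H) (hvC : ∀ n, v n ∈ C)
    (hv : ∀ n, v n = (1 - lam n) • T (v n) + lam n • G (T (v n)))
    (ε : ℝ) (hε : ε ∈ Set.Ioc (0 : ℝ) 1) (g : ℕ → ℕ) :
    ∃ j ≤ XiDef ε g χ h d τ, ‖v j - v (gTil g j)‖ ≤ ε :=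
  resolvent_metastable_single_general d hd C hcv hbd T hTm hT τ hτ0 hτ1 G hGm hG lam hlam h hh hlamh
    χ hχ v hvC hv ε hε.1 g
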